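/- arXiv:1205.2773 — 2 statements merged into one kernel-verified Lean document; each statement's English description precedes it below -/
import Mathlib

section
/- Let D ⊆ ℂ be an open connected set, let f : ℂ → ℂ be holomorphic on D and not identically zero on D, and suppose Re(f'(s)/f(s)) < 0 for all s ∈ D with f(s) ≠ 0. Then f has no zeros in D. -/
open Complex

theorem no_zeros_of_re_log_deriv_neg
    (D : Set ℂ) (hD : IsOpen D) (hDconn : IsConnected D)
    (f : ℂ → ℂ) (hf : DifferentiableOn ℂ f D)
    (hne : ∃ z ∈ D, f z ≠ 0)
    (hneg : ∀ s ∈ D, f s ≠ 0 → (deriv f s / f s).re < 0) :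
    ∀ s ∈ D, f s ≠ 0 := by
  intro s hs h0
  obtain ⟨z, hz, hfz⟩ := hne
  obtain ⟨ε, hε, hb⟩ := Metric.isOpen_iff.1 hD s hs
  have hmem : ∀ t ∈ Set.Ico (0:ℝ) ε, s + (t:ℂ) ∈ D := by
    intro t ht
    apply hb
    simp [abs_of_nonneg ht.1, ht.2]
  have hder : ∀ t ∈ Set.Ico (0:ℝ) ε, HasDerivAt (fun t : ℝ => ‖f (s + (t:ℂ))‖ ^ 2)
      (2 * inner ℝ (f (s + (t:ℂ))) (deriv f (s + (t:ℂ)))) t := by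
    intro t ht
    have h1 : HasDerivAt f (deriv f (s + (t:ℂ))) (s + (t:ℂ)) :=
      (hf.differentiableAt (hD.mem_nhds (hmem t ht))).hasDerivAt
    have h2 : HasDerivAt (fun w : ℂ => f (s + w)) (deriv f (s + (t:ℂ))) (t:ℂ) :=
      h1.comp_const_add s (t:ℂ)
    exact h2.comp_ofReal.norm_sq
  have hanti : AntitoneOn (fun t : ℝ => ‖f (s + (t:ℂ))‖ ^ 2) (Set.Ico 0 ε) := by
    apply antitoneOn_of_deriv_nonpos (convex_Ico 0 ε)
    · exact fun t ht => (hder t ht).continuousAt.continuousWithinAt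
    · exact fun t ht => (hder t (interior_subset ht)).differentiableAt.differentiableWithinAt
    · intro t ht
      have ht' := interior_subset ht
      rw [(hder t ht').deriv]
      by_cases hft : f (s + (t:ℂ)) = 0
      · simp [hft]
      · have h3 := hneg _ (hmem t ht') hft
        have hpos : 0 < normSq (f (s + (t:ℂ))) := normSq_pos.2 hft
        rw [Complex.div_re, ← add_div, div_neg_iff] at h3
        rw [Complex.inner]
        simp only [mul_re, conj_re, conj_im]
        rcases h3 with h3 | h3
        · linarith [h3.2]
        · nlinarith [h3.1]
  have hzero : ∀ t ∈ Set.Ico (0:ℝ) ε, f (s + (t:ℂ)) = 0 := by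
    intro t ht
    have h4 := hanti (Set.left_mem_Ico.2 hε) ht ht.1
    simp [h0] at h4
    exact h4
  have han : AnalyticOnNhd ℂ f D := hf.analyticOnNhd hD
  refine hfz (han.eqOn_zero_of_preconnected_of_mem_closure hDconn.isPreconnected hs ?_ hz)
  rw [Metric.mem_closure_iff]
  intro δ hδ
  have hm : 0 < min δ ε := lt_min hδ hε
  have hm1 := min_le_left δ ε
  have hm2 := min_le_right δ ε
  refine ⟨s + ((min δ ε / 2 : ℝ) : ℂ), ⟨hzero _ ⟨by linarith, by linarith⟩, ?_⟩, ?_⟩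
  · intro h
    have h5 : ((min δ ε / 2 : ℝ) : ℂ) = 0 := by simpa only [Set.mem_singleton_iff, add_eq_left] using h
    rw [ofReal_eq_zero] at h5
    linarith
  · rw [dist_eq_norm, sub_add_cancel_left, norm_neg, norm_real, Real.norm_of_nonneg (by linarith)]
    linarith
end

section
/- Let ζ denote the Riemann zeta function and let ξ denote the Riemann xi function. For every s = σ + it with σ < 1/2, |t| ≥ 8, and ζ(s) ≠ 0, one has Re(ζ'(s)/ζ(s)) < Re(ξ'(s)/ξ(s)). -/
open Complex Real

/-- The Riemann xi function, `ξ(s) = (s-1) Γ(1+s/2) π^(-s/2) ζ(s)`. -/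
noncomputable def riemannXi (s : ℂ) : ℂ :=
  (s - 1) * Complex.Gamma (1 + s / 2) * (π : ℂ) ^ (-s / 2) * riemannZeta s


lemma aux_log (u Y : ℝ) (hY : 16 ≤ Y) :
    u / (u ^ 2 + Y) ≤ 1/2 * Real.log ((u + 1/2) ^ 2 + Y) - 1/2 * Real.log ((u - 1/2) ^ 2 + Y)
      + 1 / (10 * (u ^ 2 + 16)) := by
  have hB : 0 < u ^ 2 + Y := by positivity
  have hP : 0 < (u + 1/2) ^ 2 + Y := by positivity
  have hM : 0 < (u - 1/2) ^ 2 + Y := by positivity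
  have hA : 0 < u ^ 2 + Y + 1/4 := by positivity
  have h10 : 1 / (10 * (u ^ 2 + Y)) ≤ 1 / (10 * (u ^ 2 + 16)) := by gcongr
  refine le_trans ?_ (add_le_add_right h10 _)
  rcases le_total 0 u with hu | hu
  · have h1 := Real.le_log_one_add_of_nonneg (x := 2 * u / ((u - 1/2) ^ 2 + Y)) (by positivity)
    have e1 : 1 + 2 * u / ((u - 1/2) ^ 2 + Y) = ((u + 1/2) ^ 2 + Y) / ((u - 1/2) ^ 2 + Y) := by
      field_simp; ring
    rw [e1, Real.log_div hP.ne' hM.ne'] at h1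
    have e2 : 2 * (2 * u / ((u - 1/2) ^ 2 + Y)) / (2 * u / ((u - 1/2) ^ 2 + Y) + 2)
        = 2 * u / (u ^ 2 + Y + 1/4) := by
      rw [div_eq_div_iff (by positivity) (by positivity)]
      field_simp
      ring
    rw [e2] at h1
    have h3 : u / (u ^ 2 + Y) ≤ u / (u ^ 2 + Y + 1/4) + 1 / (10 * (u ^ 2 + Y)) := by
      rw [div_add_div _ _ (by positivity) (by positivity), div_le_div_iff₀ (by positivity) (by positivity)]
      have : 0 ≤ (u ^ 2 + Y) * (u^2+Y+1/4 - 10 / 4 * u) := by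
        apply mul_nonneg hB.le
        nlinarith [sq_nonneg (u - 5/4)]
      nlinarith
    have h4 : u / (u ^ 2 + Y + 1/4) = 1/2 * (2 * u / (u ^ 2 + Y + 1/4)) := by ring
    linarith
  · obtain ⟨v, rfl⟩ : ∃ v, u = -v := ⟨-u, by ring⟩
    have hv : 0 ≤ v := by linarith
    set x := ((-v - 1/2) ^ 2 + Y) / ((-v + 1/2) ^ 2 + Y) with hx
    have hx0 : 0 < x := by positivity
    have hx1 : 1 ≤ x := by
      rw [hx, one_le_div hP]; nlinarith
    have h1 := Real.self_le_sinh_iff.2 (Real.log_nonneg hx1)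
    rw [Real.sinh_log hx0, hx, inv_div, Real.log_div hM.ne' hP.ne'] at h1
    set A := v ^ 2 + Y + 1/4 with hAd
    have eM : (-v - 1/2) ^ 2 + Y = A + v := by rw [hAd]; ring
    have eP : (-v + 1/2) ^ 2 + Y = A - v := by rw [hAd]; ring
    have eB : (-v) ^ 2 + Y = A - 1/4 := by rw [hAd]; ring
    rw [eM, eP] at h1
    rw [eM, eP, eB]
    rw [eP] at hP
    rw [eM] at hM
    rw [eB] at hB
    have h2 : ((A + v) / (A - v) - (A - v) / (A + v)) / 2 = 2 * (A * v) / ((A - v) * (A + v)) := by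
      field_simp; ring
    rw [h2] at h1
    have h3 : A * v / ((A - v) * (A + v)) ≤ v / (A - 1/4) + 1 / (10 * (A - 1/4)) := by
      rw [div_add_div _ _ (by positivity) (by positivity), div_le_div_iff₀ (by positivity) (by positivity)]
      have hA2 : (v^2 + 16.25)^2 ≤ A^2 := by
        apply pow_le_pow_left₀ (by positivity)
        rw [hAd]; linarith
      have key : 0 ≤ (A^2 - v^2) / 10 - v^3 + v * A / 4 := by
        have : 0 ≤ v * A := by positivity
        nlinarith [sq_nonneg (v^2 - 5 * v), sq_nonneg v]
      have := mul_nonneg hB.le key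
      nlinarith
    have h4 : 2 * (A * v) / ((A - v) * (A + v)) = 2 * (A * v / ((A - v) * (A + v))) := by ring
    have h5 : -v / (A - 1/4) = - (v / (A - 1/4)) := by ring
    rw [h5]
    linarith

lemma aux_arctan (u : ℝ) :
    1 / (10 * (u ^ 2 + 16)) ≤ 0.027 * (Real.arctan ((u + 1/2) / 4) - Real.arctan ((u - 1/2) / 4)) := by
  have h := Real.arctan_add (x := (u + 1/2) / 4) (y := -((u - 1/2) / 4)) (by nlinarith [sq_nonneg u])
  rw [Real.arctan_neg, ← sub_eq_add_neg] at h
  rw [h]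
  set q := ((u + 1/2) / 4 + -((u - 1/2) / 4)) / (1 - (u + 1/2) / 4 * -((u - 1/2) / 4)) with hq
  set P := u ^ 2 + 15.75 with hP
  have hPp : 15.75 ≤ P := by rw [hP]; nlinarith [sq_nonneg u]
  have hqP : q = 4 / P := by
    have : 1 - (u + 1/2) / 4 * -((u - 1/2) / 4) = P / 16 := by rw [hP]; ring
    rw [hq, this]
    have : P ≠ 0 := by positivity
    field_simp; ring
  have hq0 : 0 ≤ q := by rw [hqP]; positivity
  have h0 : 0 ≤ Real.arctan q := Real.arctan_nonneg.2 hq0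
  have h1 := Real.sin_le h0
  rw [Real.sin_arctan] at h1
  have h2 : q / (1 + q^2) ≤ q / √(1 + q^2) := by
    gcongr
    rw [Real.sqrt_le_left (by positivity)]
    nlinarith [sq_nonneg q, sq_nonneg (q^2)]
  have h3 : q / (1 + q^2) = 4 * P / (P^2 + 16) := by
    rw [hqP]; field_simp; norm_num
  have h4 : 1 / (10 * (u ^ 2 + 16)) ≤ 0.027 * (4 * P / (P^2 + 16)) := by
    have : u ^ 2 + 16 = P + 1/4 := by rw [hP]; ring
    rw [this, ← mul_div_assoc, div_le_div_iff₀ (by positivity) (by positivity)]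
    nlinarith
  linarith

lemma aux_sum (x Y : ℝ) (hY : 16 ≤ Y) (n : ℕ) :
    ∑ k ∈ Finset.range (n+1), (x + k) / ((x + k) ^ 2 + Y) ≤
      1/2 * Real.log ((x + n + 1/2) ^ 2 + Y) - Real.log 4 + 0.027 * π := by
  have key : ∀ m : ℕ, ∑ k ∈ Finset.range m, (x + k) / ((x + k) ^ 2 + Y) ≤
      (1/2 * Real.log ((x + m - 1/2) ^ 2 + Y) + 0.027 * Real.arctan ((x + m - 1/2) / 4)) -
      (1/2 * Real.log ((x - 1/2) ^ 2 + Y) + 0.027 * Real.arctan ((x - 1/2) / 4)) := by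
    intro m
    induction m with
    | zero => simp
    | succ m ih =>
      rw [Finset.sum_range_succ]
      have h1 := aux_log (x + m) Y hY
      have h2 := aux_arctan (x + m)
      push_cast
      have e : x + (m + 1 : ℝ) - 1/2 = x + m + 1/2 := by ring
      rw [e]
      linarith
  have h := key (n+1)
  push_cast at h
  have e : x + (n + 1 : ℝ) - 1/2 = x + n + 1/2 := by ring
  rw [e] at h
  have h1 := Real.arctan_lt_pi_div_two ((x + n + 1/2) / 4)
  have h2 := Real.neg_pi_div_two_lt_arctan ((x - 1/2) / 4)
  have h3 : Real.log 4 ≤ 1/2 * Real.log ((x - 1/2) ^ 2 + Y) := by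
    have : Real.log ((4:ℝ)^2) ≤ Real.log ((x - 1/2) ^ 2 + Y) := by
      apply Real.log_le_log (by norm_num); nlinarith [sq_nonneg (x - 1/2)]
    rw [Real.log_pow] at this
    push_cast at this
    linarith
  linarith

open Filter Topology in
lemma aux_tendsto (b Y : ℝ) :
    Tendsto (fun n : ℕ => 1/2 * Real.log ((b + n + 1/2) ^ 2 + Y) - Real.log n) atTop (𝓝 0) := by
  have h1 : Tendsto (fun n : ℕ => (1 + (b + 1/2) * (n:ℝ)⁻¹)^2 + Y * (n:ℝ)⁻¹ ^ 2) atTop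
      (𝓝 ((1 + (b+1/2) * 0)^2 + Y * 0 ^ 2)) := by
    have := tendsto_inv_atTop_nhds_zero_nat (𝕜 := ℝ)
    exact ((this.const_mul (b+1/2)).const_add 1 |>.pow 2).add ((this.pow 2).const_mul Y)
  have h2 := ((Real.continuousAt_log (x := (1 + (b+1/2) * 0)^2 + Y * 0 ^ 2) (by norm_num)).tendsto.comp h1).const_mul (1/2)
  have e0 : (1/2:ℝ) * Real.log ((1 + (b+1/2) * 0)^2 + Y * 0 ^ 2) = 0 := by norm_num
  rw [e0] at h2
  refine h2.congr' ?_
  have hne : ∀ᶠ n : ℕ in atTop, (1 + (b + 1/2) * (n:ℝ)⁻¹)^2 + Y * (n:ℝ)⁻¹ ^ 2 ≠ 0 := 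
    h1.eventually_ne (by norm_num)
  filter_upwards [eventually_gt_atTop 0, hne] with n hn hn2
  have hn' : (n:ℝ) ≠ 0 := by positivity
  have : (b + n + 1/2) ^ 2 + Y = (n:ℝ)^2 * ((1 + (b + 1/2) * (n:ℝ)⁻¹)^2 + Y * (n:ℝ)⁻¹ ^ 2) := by
    field_simp; ring
  rw [this, Real.log_mul (by positivity) hn2, Real.log_pow]
  simp only [Function.comp]
  push_cast
  ring

/-- log of the absolute value of GammaSeq on a horizontal line -/
noncomputable def phiSeq (Y : ℝ) (n : ℕ) (x : ℝ) : ℝ :=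
  x * Real.log n + Real.log (n.factorial) - ∑ k ∈ Finset.range (n+1), 1/2 * Real.log ((x + k)^2 + Y)

lemma phiSeq_deriv (Y : ℝ) (hY : 16 ≤ Y) (n : ℕ) (x : ℝ) :
    HasDerivAt (phiSeq Y n)
      (Real.log n - ∑ k ∈ Finset.range (n+1), (x + k) / ((x + k)^2 + Y)) x := by
  unfold phiSeq
  have hs : HasDerivAt (fun x : ℝ => ∑ k ∈ Finset.range (n+1), 1/2 * Real.log ((x + k)^2 + Y))
      (∑ k ∈ Finset.range (n+1), (x + k) / ((x + k)^2 + Y)) x := by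
    apply HasDerivAt.fun_sum
    intro k _
    have h0 : (x + k)^2 + Y ≠ 0 := by positivity
    have h1 : HasDerivAt (fun x : ℝ => (x + k)^2 + Y) (2 * (x + k)) x := by
      have := (((hasDerivAt_id x).add_const (k:ℝ)).pow 2).add_const Y
      simpa using this
    have h2 := (h1.log h0).const_mul (1/2)
    refine h2.congr_deriv ?_
    field_simp
  have h3 := (((hasDerivAt_id x).mul_const (Real.log n)).add_const (Real.log n.factorial)).sub hs
  refine h3.congr_deriv ?_
  simp

lemma phiSeq_eq (y : ℝ) (hy : 4 ≤ |y|) (n : ℕ) (hn : 0 < n) (x : ℝ) :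
    phiSeq (y^2) n x = Real.log ‖Complex.GammaSeq (x + y * I) n‖ := by
  have hy0 : y ≠ 0 := by rintro rfl; norm_num at hy
  have hne : ∀ k : ℕ, ((x + y * I : ℂ) + k) ≠ 0 := by
    intro k h
    have := congrArg Complex.im h
    simp at this
    exact hy0 this
  rw [Complex.GammaSeq, norm_div, norm_mul, norm_prod,
    Complex.norm_natCast_cpow_of_pos hn, Complex.norm_natCast,
    Real.log_div (by positivity) (Finset.prod_ne_zero_iff.2 fun k _ => norm_ne_zero_iff.2 (hne k)),
    Real.log_mul (by positivity) (by positivity),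
    Real.log_rpow (by positivity), Real.log_prod (fun k _ => norm_ne_zero_iff.2 (hne k))]
  unfold phiSeq
  congr 1
  · simp
  · apply Finset.sum_congr rfl
    intro k _
    have h : ‖(x + y * I : ℂ) + k‖ ^ 2 = (x + k)^2 + y^2 := by
      rw [← Complex.normSq_eq_norm_sq, Complex.normSq_apply]
      simp
      ring
    rw [← h, Real.log_pow]
    push_cast
    ring

open Filter Topology in
lemma log_norm_Gamma_diff (y : ℝ) (hy : 4 ≤ |y|) (x b : ℝ) (hxb : x ≤ b) :
    (Real.log 4 - 0.027 * π) * (b - x) ≤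
      Real.log ‖Complex.Gamma (b + y * I)‖ - Real.log ‖Complex.Gamma (x + y * I)‖ := by
  have hY : 16 ≤ y^2 := by
    rw [← sq_abs]; nlinarith
  have hy0 : y ≠ 0 := by rintro rfl; norm_num at hy
  have hG : ∀ x : ℝ, Complex.Gamma (x + y * I) ≠ 0 := by
    intro x
    apply Complex.Gamma_ne_zero
    intro m h
    have := congrArg Complex.im h
    simp at this
    exact hy0 this
  have hlim : ∀ x : ℝ, Tendsto (fun n => phiSeq (y^2) n x) atTop
      (𝓝 (Real.log ‖Complex.Gamma (x + y * I)‖)) := by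
    intro x
    have h := (Complex.GammaSeq_tendsto_Gamma (x + y * I)).norm
    have h2 := (Real.continuousAt_log (norm_ne_zero_iff.2 (hG x))).tendsto.comp h
    refine h2.congr' ?_
    filter_upwards [eventually_gt_atTop 0] with n hn
    rw [phiSeq_eq y hy n hn]
    rfl
  have hδ := aux_tendsto b (y^2)
  have hL : Tendsto (fun n : ℕ => (Real.log 4 - 0.027 * π - (1/2 * Real.log ((b + n + 1/2) ^ 2 + y^2) - Real.log n)) * (b - x)) atTop
      (𝓝 ((Real.log 4 - 0.027 * π - 0) * (b - x))) := (hδ.const_sub _).mul_const _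
  rw [sub_zero] at hL
  refine le_of_tendsto_of_tendsto hL ((hlim b).sub (hlim x)) ?_
  obtain ⟨N, hN⟩ := exists_nat_ge (-x)
  filter_upwards [eventually_ge_atTop N] with n hn
  have hnx : 0 ≤ x + n := by
    have : (N:ℝ) ≤ n := by exact_mod_cast hn
    linarith
  refine Convex.mul_sub_le_image_sub_of_le_deriv (convex_Icc x b)
    (fun u _ => (phiSeq_deriv _ hY n u).continuousAt.continuousWithinAt)
    (fun u _ => (phiSeq_deriv _ hY n u).differentiableAt.differentiableWithinAt)
    ?_ x (Set.left_mem_Icc.2 hxb) b (Set.right_mem_Icc.2 hxb) hxb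
  intro u hu
  have hu' := interior_subset hu
  rw [(phiSeq_deriv _ hY n u).deriv]
  have h1 := aux_sum u (y^2) hY n
  have h2 : Real.log ((u + n + 1/2) ^ 2 + y^2) ≤ Real.log ((b + n + 1/2) ^ 2 + y^2) := by
    have := hu'.1
    have := hu'.2
    apply Real.log_le_log (by positivity)
    gcongr
    linarith
  linarith

open Filter Topology in
lemma re_digamma_ge (y : ℝ) (hy : 4 ≤ |y|) (x : ℝ) :
    Real.log 4 - 0.027 * π ≤
      (deriv Complex.Gamma (x + y * I) / Complex.Gamma (x + y * I)).re := by
  have hy0 : y ≠ 0 := by rintro rfl; norm_num at hy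
  have hne : ∀ m : ℕ, (x + y * I : ℂ) ≠ -m := by
    intro m h
    have := congrArg Complex.im h
    simp at this
    exact hy0 this
  have hG := Complex.Gamma_ne_zero hne
  have hd := (Complex.differentiableAt_Gamma _ hne).hasDerivAt
  have hline : HasDerivAt (fun u : ℝ => (u + y * I : ℂ)) 1 x :=
    (Complex.ofRealCLM.hasDerivAt (x := x)).add_const _
  have hf : HasDerivAt (fun u : ℝ => Complex.Gamma (u + y * I)) (deriv Complex.Gamma (x + y * I)) x := by
    have := HasDerivAt.comp x hd hline
    rw [mul_one] at this
    exact this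
  have h1 := hf.norm_sq.log (by simpa using hG)
  have h2 := h1.const_mul (1/2)
  have hL : HasDerivAt (fun u : ℝ => Real.log ‖Complex.Gamma (u + y * I)‖)
      (deriv Complex.Gamma (x + y * I) / Complex.Gamma (x + y * I)).re x := by
    have e1 : (fun u : ℝ => Real.log ‖Complex.Gamma (u + y * I)‖)
        = fun u : ℝ => 1 / 2 * Real.log (‖Complex.Gamma (u + y * I)‖ ^ 2) := by
      ext u
      rw [Real.log_pow]
      push_cast
      ring
    rw [e1]
    refine HasDerivAt.congr_deriv h2 ?_
    · rw [Complex.div_re, Complex.inner, Complex.normSq_eq_norm_sq]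
      simp
      field_simp
  rw [hasDerivAt_iff_tendsto_slope] at hL
  have hL' := hL.mono_left (nhdsWithin_mono x (s := Set.Ioi x) (fun u hu => ne_of_gt hu))
  refine ge_of_tendsto hL' ?_
  filter_upwards [self_mem_nhdsWithin] with b hb
  have hb' : 0 < b - x := sub_pos.2 hb
  rw [slope_def_field, le_div_iff₀ hb']
  exact log_norm_Gamma_diff y hy x b (le_of_lt hb)

theorem re_log_deriv_zeta_lt_xi (s : ℂ) (hre : s.re < 1 / 2) (him : 8 ≤ |s.im|)
    (hζ : riemannZeta s ≠ 0) :
    (deriv riemannZeta s / riemannZeta s).re <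
      (deriv riemannXi s / riemannXi s).re := by
  have hs0 : s.im ≠ 0 := by intro h; rw [h] at him; norm_num at him
  have hs1 : s ≠ 1 := by rintro rfl; simp at hs0
  have hy : 4 ≤ |s.im / 2| := by rw [abs_div, abs_two]; linarith
  have hψ := re_digamma_ge (s.im / 2) hy (1 + s.re / 2)
  have hz : (((1 + s.re / 2 : ℝ) : ℂ) + ((s.im / 2 : ℝ) : ℂ) * I) = 1 + s / 2 := by
    apply Complex.ext <;> simp
  rw [hz] at hψ
  have hne : ∀ m : ℕ, (1 + s / 2 : ℂ) ≠ -m := by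
    intro m h
    have := congrArg Complex.im h
    simp at this
    exact hs0 this
  have hG := Complex.Gamma_ne_zero hne
  have hd := (Complex.differentiableAt_Gamma _ hne).hasDerivAt
  have hπ0 : (π : ℂ) ≠ 0 := by exact_mod_cast Real.pi_ne_zero
  have d1 : HasDerivAt (fun s : ℂ => s - 1) 1 s := (hasDerivAt_id s).sub_const 1
  have d2 : HasDerivAt (fun s : ℂ => Complex.Gamma (1 + s / 2))
      (deriv Complex.Gamma (1 + s / 2) * (1 / 2)) s :=
    HasDerivAt.comp s hd (((hasDerivAt_id s).div_const 2).const_add 1)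
  have d3 : HasDerivAt (fun s : ℂ => (π : ℂ) ^ (-s / 2))
      ((π : ℂ) ^ (-s / 2) * Complex.log π * (-1 / 2)) s :=
    HasDerivAt.const_cpow ((hasDerivAt_id s).neg.div_const 2) (Or.inl hπ0)
  have d4 := (differentiableAt_riemannZeta hs1).hasDerivAt
  have hX : HasDerivAt riemannXi _ s := ((d1.mul d2).mul d3).mul d4
  have hp : (π : ℂ) ^ (-s / 2) ≠ 0 := by simp [Complex.cpow_eq_zero_iff, hπ0]
  have hs1' : s - 1 ≠ 0 := sub_ne_zero.2 hs1
  have e : deriv riemannXi s / riemannXi s = 1 / (s - 1)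
      + deriv Complex.Gamma (1 + s / 2) / Complex.Gamma (1 + s / 2) * ((1 / 2 : ℝ) : ℂ)
      - ((Real.log π / 2 : ℝ) : ℂ) + deriv riemannZeta s / riemannZeta s := by
    rw [hX.deriv, riemannXi]
    push_cast
    rw [Complex.ofReal_log Real.pi_pos.le]
    simp only [Pi.mul_apply]
    generalize Complex.Gamma (1 + s / 2) = G at hG ⊢
    generalize deriv Complex.Gamma (1 + s / 2) = G'
    generalize (π : ℂ) ^ (-s / 2) = p at hp ⊢
    field_simp
    ring
  rw [e]
  simp only [Complex.add_re, Complex.sub_re, Complex.re_mul_ofReal, Complex.ofReal_re]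
  have h1 : -(1 / 16) ≤ (1 / (s - 1)).re := by
    rw [one_div (s - 1), Complex.inv_re, Complex.normSq_apply]
    simp only [Complex.sub_re, Complex.sub_im, Complex.one_re, Complex.one_im, sub_zero]
    have h64 : 64 ≤ s.im * s.im := by nlinarith [abs_mul_abs_self s.im]
    rw [le_div_iff₀ (by nlinarith [mul_self_nonneg (s.re - 1)])]
    nlinarith [mul_self_nonneg (s.re - 1 + 8)]
  have h2 : 1 - π / 4 ≤ Real.log 4 - Real.log π := by
    rw [← Real.log_div (by norm_num) Real.pi_ne_zero]
    have := Real.one_sub_inv_le_log_of_pos (x := 4 / π) (by positivity)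
    rwa [inv_div] at this
  have h3 := Real.pi_lt_d4
  linarith
end
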